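/- Let D be a dendriform algebra, V a vector space, and let Ω(D,V), Ω′(D,V) be two dendriform extending structures of D through V with unified products D♮V, D♮′V. Then there exist a linear map g : V → D and a linear automorphism h : V → V satisfying conditions (E1)–(E5) if and only if there exists an isomorphism of dendriform algebras φ : D♮V → D♮′V with φ(a,0) = (a,0) for all a ∈ D. Moreover, there exists a linear map g : V → D such that (g, Id_V) satisfies (E1)–(E5) if and only if there exists an isomorphism of dendriform algebras φ : D♮V → D♮′V with φ(a,0) = (a,0) for all a ∈ D and with second component of φ(a,x) equal to x for all a ∈ D, x ∈ V. -/

import Mathlib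

/-!
A linear endomorphism `φ` of `D × V` fixing every `(a, 0)` is determined by its values on
`0 × V`, so it has the form `φ (a, x) = (a + g x, h x)` with `g`, `h` linear (`eq_twist`), and
such a map is bijective exactly when `h` is (`twist_bijective_iff`). By bilinearity,
compatibility of `φ` with an operation of the unified products can be tested on the pairs
`(D, V)`, `(V, D)`, `(V, V)` (on `(D, D)` it is automatic); comparing components there gives
precisely (E1)–(E5) (`twist_uSucc_iff`). Exchanging the indices `1` and `2` of the datum turns
the statement for `⪰` into the one for `⪯`. The condition that `φ` preserves the second
component is `h = id`.
-/

/- Common framework for dendriform algebras, extending structures and unified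
products, over the field `ℂ`.  All operations are encoded as plain functions
together with bilinearity predicates. -/

namespace DendriformES

section Basic

variable {M N P : Type*} [AddCommGroup M] [Module ℂ M] [AddCommGroup N] [Module ℂ N]
  [AddCommGroup P] [Module ℂ P]

/-- A map `f : M → N → P` is (ℂ-)bilinear. -/
def IsBilinear (f : M → N → P) : Prop :=
  (∀ a b y, f (a + b) y = f a y + f b y) ∧
  (∀ (c : ℂ) (a : M) (y : N), f (c • a) y = c • f a y) ∧
  (∀ a x y, f a (x + y) = f a x + f a y) ∧
  (∀ (c : ℂ) (a : M) (x : N), f a (c • x) = c • f a x)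

end Basic

section Dend

variable {D V : Type*} [AddCommGroup D] [Module ℂ D] [AddCommGroup V] [Module ℂ V]

/-- The three dendriform axioms for a pair of binary operations `s = ≻`, `p = ≺`. -/
def DendAxioms (s p : D → D → D) : Prop :=
  (∀ x y z, s (s x y + p x y) z = s x (s y z)) ∧
  (∀ x y z, p (p x y) z = p x (s y z + p y z)) ∧
  (∀ x y z, p (s x y) z = s x (p y z))

/-- `(D, s, p)` is a dendriform algebra: both operations are bilinear and the
three dendriform axioms hold. -/
def IsDendriform (s p : D → D → D) : Prop :=
  IsBilinear s ∧ IsBilinear p ∧ DendAxioms s p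

/-- `(V, t1, t2)` is a left module over the dendriform algebra `(D, s, p)`. -/
def IsLeftDModule (s p : D → D → D) (t1 t2 : D → V → V) : Prop :=
  IsBilinear t1 ∧ IsBilinear t2 ∧
  (∀ a b x, t1 (s a b + p a b) x = t1 a (t1 b x)) ∧
  (∀ a b x, t2 (p a b) x = t2 a (t1 b x + t2 b x)) ∧
  (∀ a b x, t2 (s a b) x = t1 a (t2 b x))

/-- `(V, l1, l2)` is a right module over the dendriform algebra `(D, s, p)`. -/
def IsRightDModule (s p : D → D → D) (l1 l2 : V → D → V) : Prop :=
  IsBilinear l1 ∧ IsBilinear l2 ∧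
  (∀ a b x, l1 (l1 x a + l2 x a) b = l1 x (s a b)) ∧
  (∀ a b x, l2 (l2 x a) b = l2 x (s a b + p a b)) ∧
  (∀ a b x, l2 (l1 x a) b = l1 x (p a b))

/-- `(V, t1, t2, l1, l2)` is a bimodule over the dendriform algebra `(D, s, p)`. -/
def IsDBimodule (s p : D → D → D) (t1 t2 : D → V → V) (l1 l2 : V → D → V) : Prop :=
  IsLeftDModule s p t1 t2 ∧ IsRightDModule s p l1 l2 ∧
  (∀ a b x, l1 (t1 a x + t2 a x) b = t1 a (l1 x b)) ∧
  (∀ a b x, l2 (t2 a x) b = t2 a (l1 x b + l2 x b)) ∧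
  (∀ a b x, l2 (t1 a x) b = t1 a (l2 x b))

/-- A morphism of dendriform algebras: a linear map preserving both operations. -/
def IsDendMorphism (s p : D → D → D) (s' p' : V → V → V) (φ : D → V) : Prop :=
  IsLinearMap ℂ φ ∧ (∀ x y, φ (s x y) = s' (φ x) (φ y)) ∧
    (∀ x y, φ (p x y) = p' (φ x) (φ y))

end Dend

/-- An extending datum `Ω(D,V)` of `D` through `V`: twelve maps
`tr1, tr2 = ▷₁, ▷₂ : D×V→V`, `sl1, sl2 = ◁₁, ◁₂ : V×D→V`,
`hr1, hr2 = ⇀₁, ⇀₂ : V×D→D`, `hl1, hl2 = ↼₁, ↼₂ : D×V→D`,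
`cf1, cf2 = f₁, f₂ : V×V→D`, `sv, pv = ≻_V, ≺_V : V×V→V`. -/
structure ExtendingDatum (D V : Type*) [AddCommGroup D] [Module ℂ D]
    [AddCommGroup V] [Module ℂ V] where
  tr1 : D → V → V
  tr2 : D → V → V
  sl1 : V → D → V
  sl2 : V → D → V
  hr1 : V → D → D
  hr2 : V → D → D
  hl1 : D → V → D
  hl2 : D → V → D
  cf1 : V → V → D
  cf2 : V → V → D
  sv : V → V → V
  pv : V → V → V

section Datum

variable {D V : Type*} [AddCommGroup D] [Module ℂ D] [AddCommGroup V] [Module ℂ V]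

/-- All twelve maps of an extending datum are bilinear. -/
def ExtendingDatum.Bilinear (Ω : ExtendingDatum D V) : Prop :=
  IsBilinear Ω.tr1 ∧ IsBilinear Ω.tr2 ∧ IsBilinear Ω.sl1 ∧ IsBilinear Ω.sl2 ∧
  IsBilinear Ω.hr1 ∧ IsBilinear Ω.hr2 ∧ IsBilinear Ω.hl1 ∧ IsBilinear Ω.hl2 ∧
  IsBilinear Ω.cf1 ∧ IsBilinear Ω.cf2 ∧ IsBilinear Ω.sv ∧ IsBilinear Ω.pv

/-- The operation `⪰` of the unified product `D ♮ V`. -/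
def uSucc (s : D → D → D) (Ω : ExtendingDatum D V) : D × V → D × V → D × V :=
  fun u v =>
    (s u.1 v.1 + Ω.hl1 u.1 v.2 + Ω.hr1 u.2 v.1 + Ω.cf1 u.2 v.2,
     Ω.tr1 u.1 v.2 + Ω.sl1 u.2 v.1 + Ω.sv u.2 v.2)

/-- The operation `⪯` of the unified product `D ♮ V`. -/
def uPrec (p : D → D → D) (Ω : ExtendingDatum D V) : D × V → D × V → D × V :=
  fun u v =>
    (p u.1 v.1 + Ω.hl2 u.1 v.2 + Ω.hr2 u.2 v.1 + Ω.cf2 u.2 v.2,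
     Ω.tr2 u.1 v.2 + Ω.sl2 u.2 v.1 + Ω.pv u.2 v.2)

/-- An extending datum is a dendriform extending structure when the unified
product `D ♮ V` is a dendriform algebra. -/
def IsExtendingStructure (s p : D → D → D) (Ω : ExtendingDatum D V) : Prop :=
  Ω.Bilinear ∧ IsDendriform (uSucc s Ω) (uPrec p Ω)

/-- Conditions (E1)–(E5) on a pair of linear maps `g : V → D`, `h : V → V`
relating two extending datums `Ω`, `Ω'`. -/
def ECond (s p : D → D → D) (Ω Ω' : ExtendingDatum D V) (g : V → D) (h : V → V) : Prop :=
  -- (E1)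
  (∀ a x, h (Ω.tr1 a x) = Ω'.tr1 a (h x)) ∧
  (∀ a x, h (Ω.tr2 a x) = Ω'.tr2 a (h x)) ∧
  (∀ a x, h (Ω.sl1 x a) = Ω'.sl1 (h x) a) ∧
  (∀ a x, h (Ω.sl2 x a) = Ω'.sl2 (h x) a) ∧
  -- (E2)
  (∀ a x, Ω.hr1 x a + g (Ω.sl1 x a) = s (g x) a + Ω'.hr1 (h x) a) ∧
  (∀ a x, Ω.hr2 x a + g (Ω.sl2 x a) = p (g x) a + Ω'.hr2 (h x) a) ∧
  -- (E3)
  (∀ a x, Ω.hl1 a x + g (Ω.tr1 a x) = s a (g x) + Ω'.hl1 a (h x)) ∧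
  (∀ a x, Ω.hl2 a x + g (Ω.tr2 a x) = p a (g x) + Ω'.hl2 a (h x)) ∧
  -- (E4)
  (∀ x y, Ω.cf1 x y + g (Ω.sv x y) =
      s (g x) (g y) + Ω'.hl1 (g x) (h y) + Ω'.hr1 (h x) (g y) + Ω'.cf1 (h x) (h y)) ∧
  (∀ x y, Ω.cf2 x y + g (Ω.pv x y) =
      p (g x) (g y) + Ω'.hl2 (g x) (h y) + Ω'.hr2 (h x) (g y) + Ω'.cf2 (h x) (h y)) ∧
  -- (E5)
  (∀ x y, h (Ω.sv x y) = Ω'.tr1 (g x) (h y) + Ω'.sl1 (h x) (g y) + Ω'.sv (h x) (h y)) ∧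
  (∀ x y, h (Ω.pv x y) = Ω'.tr2 (g x) (h y) + Ω'.sl2 (h x) (g y) + Ω'.pv (h x) (h y))

/-- A deformation map of an extending structure `Ω(D,V)`. -/
def IsDeformationMap (s p : D → D → D) (Ω : ExtendingDatum D V) (d : V → D) : Prop :=
  IsLinearMap ℂ d ∧
  (∀ x y, s (d x) (d y) - d (Ω.sv x y) =
      d (Ω.tr1 (d x) y + Ω.sl1 x (d y)) - Ω.hl1 (d x) y - Ω.hr1 x (d y) - Ω.cf1 x y) ∧
  (∀ x y, p (d x) (d y) - d (Ω.pv x y) =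
      d (Ω.tr2 (d x) y + Ω.sl2 x (d y)) - Ω.hl2 (d x) y - Ω.hr2 x (d y) - Ω.cf2 x y)

/-- The operation `≻_d` of the deformation `V_d` of `V`. -/
def defSucc (Ω : ExtendingDatum D V) (d : V → D) : V → V → V :=
  fun x y => Ω.sv x y + Ω.tr1 (d x) y + Ω.sl1 x (d y)

/-- The operation `≺_d` of the deformation `V_d` of `V`. -/
def defPrec (Ω : ExtendingDatum D V) (d : V → D) : V → V → V :=
  fun x y => Ω.pv x y + Ω.tr2 (d x) y + Ω.sl2 x (d y)

end Datum

section Canonical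

variable {E : Type*} [AddCommGroup E] [Module ℂ E]

theorem sub_mem_ker (D : Submodule ℂ E) (ρ : E →ₗ[ℂ] E)
    (hρD : ∀ u, ρ u ∈ D) (hfix : ∀ a ∈ D, ρ a = a) (u : E) :
    u - ρ u ∈ LinearMap.ker ρ := by
  have h := hfix (ρ u) (hρD u)
  simp [LinearMap.mem_ker, map_sub, h]

/-- The canonical extending datum of `D` through `V = ker ρ` associated to a
dendriform algebra structure `(sE, pE)` on `E` and a linear retraction
`ρ : E → D`. -/
def canonicalDatum (sE pE : E → E → E) (D : Submodule ℂ E) (ρ : E →ₗ[ℂ] E)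
    (hρD : ∀ u, ρ u ∈ D) (hfix : ∀ a ∈ D, ρ a = a) :
    ExtendingDatum ↥D ↥(LinearMap.ker ρ) where
  tr1 := fun a x => ⟨sE a.1 x.1 - ρ (sE a.1 x.1), sub_mem_ker D ρ hρD hfix _⟩
  tr2 := fun a x => ⟨pE a.1 x.1 - ρ (pE a.1 x.1), sub_mem_ker D ρ hρD hfix _⟩
  sl1 := fun x a => ⟨sE x.1 a.1 - ρ (sE x.1 a.1), sub_mem_ker D ρ hρD hfix _⟩
  sl2 := fun x a => ⟨pE x.1 a.1 - ρ (pE x.1 a.1), sub_mem_ker D ρ hρD hfix _⟩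
  hr1 := fun x a => ⟨ρ (sE x.1 a.1), hρD _⟩
  hr2 := fun x a => ⟨ρ (pE x.1 a.1), hρD _⟩
  hl1 := fun a x => ⟨ρ (sE a.1 x.1), hρD _⟩
  hl2 := fun a x => ⟨ρ (pE a.1 x.1), hρD _⟩
  cf1 := fun x y => ⟨ρ (sE x.1 y.1), hρD _⟩
  cf2 := fun x y => ⟨ρ (pE x.1 y.1), hρD _⟩
  sv := fun x y => ⟨sE x.1 y.1 - ρ (sE x.1 y.1), sub_mem_ker D ρ hρD hfix _⟩
  pv := fun x y => ⟨pE x.1 y.1 - ρ (pE x.1 y.1), sub_mem_ker D ρ hρD hfix _⟩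

/-- The pair of operations on `E` associated to an extending datum of `D`
through `V = ker ρ` (the map `Υ₂`). -/
def datumToOps (D : Submodule ℂ E) (ρ : E →ₗ[ℂ] E)
    (hρD : ∀ u, ρ u ∈ D) (hfix : ∀ a ∈ D, ρ a = a) (sD pD : ↥D → ↥D → ↥D)
    (Ω : ExtendingDatum ↥D ↥(LinearMap.ker ρ)) : (E → E → E) × (E → E → E) :=
  let dp : E → ↥D := fun u => ⟨ρ u, hρD u⟩
  let vp : E → ↥(LinearMap.ker ρ) := fun u => ⟨u - ρ u, sub_mem_ker D ρ hρD hfix u⟩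
  (fun u v =>
     (sD (dp u) (dp v) : E) + (Ω.hl1 (dp u) (vp v) : E) + (Ω.hr1 (vp u) (dp v) : E)
       + (Ω.cf1 (vp u) (vp v) : E) + (Ω.tr1 (dp u) (vp v) : E) + (Ω.sl1 (vp u) (dp v) : E)
       + (Ω.sv (vp u) (vp v) : E),
   fun u v =>
     (pD (dp u) (dp v) : E) + (Ω.hl2 (dp u) (vp v) : E) + (Ω.hr2 (vp u) (dp v) : E)
       + (Ω.cf2 (vp u) (vp v) : E) + (Ω.tr2 (dp u) (vp v) : E) + (Ω.sl2 (vp u) (dp v) : E)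
       + (Ω.pv (vp u) (vp v) : E))

end Canonical

end DendriformES

namespace DendriformES

section Helpers

variable {D V : Type*} [AddCommGroup D] [Module ℂ D] [AddCommGroup V] [Module ℂ V]

/-! ### Linear maps fixing `D` pointwise -/

/-- The map `(a, x) ↦ (a + g x, h x)` on `D × V`. -/
def twist (g : V → D) (h : V → V) : D × V → D × V :=
  fun u => (u.1 + g u.2, h u.2)

theorem twist_isLinearMap {g : V → D} {h : V → V} (hg : IsLinearMap ℂ g)
    (hh : IsLinearMap ℂ h) : IsLinearMap ℂ (twist g h) where
  map_add u v := by
    ext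
    · simp only [twist, Prod.fst_add, Prod.snd_add, hg.map_add]; abel
    · simp only [twist, Prod.snd_add, hh.map_add]
  map_smul c u := by
    ext
    · simp only [twist, Prod.smul_fst, Prod.smul_snd, hg.map_smul, smul_add]
    · simp only [twist, Prod.smul_snd, hh.map_smul]

theorem twist_fix {g : V → D} {h : V → V} (hg : IsLinearMap ℂ g)
    (hh : IsLinearMap ℂ h) (a : D) : twist g h (a, 0) = (a, 0) := by
  simp [twist, hg.map_zero, hh.map_zero]

theorem twist_bijective_iff {D V : Type*} [AddCommGroup D] (g : V → D) (h : V → V) :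
    Function.Bijective (twist g h) ↔ Function.Bijective h := by
  constructor
  · rintro ⟨hi, hs⟩
    refine ⟨fun x y hxy => ?_, fun y => ?_⟩
    -- `(-g x, x)` is the vector over `x` whose image has vanishing first component
    · have h1 : twist g h (-g x, x) = twist g h (-g y, y) := by simp [twist, hxy]
      exact congrArg Prod.snd (hi h1)
    · obtain ⟨u, hu⟩ := hs (0, y)
      exact ⟨u.2, congrArg Prod.snd hu⟩
  · rintro ⟨hi, hs⟩
    refine ⟨fun u v huv => ?_, fun v => ?_⟩
    · have h2 : u.2 = v.2 := hi (congrArg Prod.snd huv)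
      have h1 : u.1 + g u.2 = v.1 + g v.2 := congrArg Prod.fst huv
      rw [h2] at h1
      exact Prod.ext (add_right_cancel h1) h2
    · obtain ⟨x, hx⟩ := hs v.2
      exact ⟨(v.1 - g x, x), by simp [twist, hx]⟩

/-- A linear map fixing `D × 0` pointwise is a twist by linear maps. -/
theorem eq_twist {φ : D × V → D × V} (hφ : IsLinearMap ℂ φ) (hfix : ∀ a : D, φ (a, 0) = (a, 0)) :
    ∃ (g : V → D) (h : V → V), IsLinearMap ℂ g ∧ IsLinearMap ℂ h ∧ φ = twist g h := by
  have hadd (x y : V) : φ (0, x + y) = φ (0, x) + φ (0, y) := by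
    rw [← hφ.map_add]; simp
  have hsmul (c : ℂ) (x : V) : φ (0, c • x) = c • φ (0, x) := by
    rw [← hφ.map_smul]; simp
  refine ⟨fun x => (φ (0, x)).1, fun x => (φ (0, x)).2, ⟨?_, ?_⟩, ⟨?_, ?_⟩, ?_⟩
  · intro x y; simp [hadd]
  · intro c x; simp [hsmul]
  · intro x y; simp [hadd]
  · intro c x; simp [hsmul]
  · funext ⟨a, x⟩
    have h1 : φ (a, x) = φ (a, 0) + φ (0, x) := by rw [← hφ.map_add]; simp
    rw [h1, hfix]
    simp [twist, Prod.ext_iff]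

/-! ### Conditions (E1)–(E5) and compatibility with the products -/

/-- The datum obtained by exchanging the maps with index `1` (including `≻_V`) and those with
index `2` (including `≺_V`). -/
def ExtendingDatum.swap (Ω : ExtendingDatum D V) : ExtendingDatum D V :=
  ⟨Ω.tr2, Ω.tr1, Ω.sl2, Ω.sl1, Ω.hr2, Ω.hr1, Ω.hl2, Ω.hl1, Ω.cf2, Ω.cf1, Ω.pv, Ω.sv⟩

theorem ExtendingDatum.Bilinear.swap {Ω : ExtendingDatum D V} (H : Ω.Bilinear) :
    Ω.swap.Bilinear := by
  obtain ⟨h1, h2, h3, h4, h5, h6, h7, h8, h9, h10, h11, h12⟩ := H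
  exact ⟨h2, h1, h4, h3, h6, h5, h8, h7, h10, h9, h12, h11⟩

theorem IsBilinear.zero_left {M N P : Type*} [AddCommGroup M] [Module ℂ M] [AddCommGroup N]
    [Module ℂ N] [AddCommGroup P] [Module ℂ P] {f : M → N → P} (H : IsBilinear f) (y : N) :
    f 0 y = 0 := by
  simpa using H.2.1 0 0 y

theorem IsBilinear.zero_right {M N P : Type*} [AddCommGroup M] [Module ℂ M] [AddCommGroup N]
    [Module ℂ N] [AddCommGroup P] [Module ℂ P] {f : M → N → P} (H : IsBilinear f) (x : M) :
    f x 0 = 0 := by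
  simpa using H.2.2.2 0 x 0

/-- The half of (E1)–(E5) concerning the operation `⪰` alone. -/
def HalfCond (s : D → D → D) (Ω Ω' : ExtendingDatum D V) (g : V → D) (h : V → V) : Prop :=
  (∀ a x, h (Ω.tr1 a x) = Ω'.tr1 a (h x)) ∧
  (∀ a x, h (Ω.sl1 x a) = Ω'.sl1 (h x) a) ∧
  (∀ a x, Ω.hr1 x a + g (Ω.sl1 x a) = s (g x) a + Ω'.hr1 (h x) a) ∧
  (∀ a x, Ω.hl1 a x + g (Ω.tr1 a x) = s a (g x) + Ω'.hl1 a (h x)) ∧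
  (∀ x y, Ω.cf1 x y + g (Ω.sv x y) =
      s (g x) (g y) + Ω'.hl1 (g x) (h y) + Ω'.hr1 (h x) (g y) + Ω'.cf1 (h x) (h y)) ∧
  (∀ x y, h (Ω.sv x y) = Ω'.tr1 (g x) (h y) + Ω'.sl1 (h x) (g y) + Ω'.sv (h x) (h y))

theorem eCond_iff (s p : D → D → D) (Ω Ω' : ExtendingDatum D V) (g : V → D) (h : V → V) :
    ECond s p Ω Ω' g h ↔ HalfCond s Ω Ω' g h ∧ HalfCond p Ω.swap Ω'.swap g h := by
  unfold ECond HalfCond ExtendingDatum.swap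
  tauto

/-- A twist is compatible with `⪰` exactly when the corresponding half of (E1)–(E5) holds. -/
theorem twist_uSucc_iff {s : D → D → D} (hs : IsBilinear s) {Ω Ω' : ExtendingDatum D V}
    (hΩ : Ω.Bilinear) (hΩ' : Ω'.Bilinear) {g : V → D} {h : V → V}
    (hg : IsLinearMap ℂ g) (hh : IsLinearMap ℂ h) :
    (∀ u v, twist g h (uSucc s Ω u v) = uSucc s Ω' (twist g h u) (twist g h v)) ↔
      HalfCond s Ω Ω' g h := by
  obtain ⟨t, -, l, -, r, -, k, -, c, -, v, -⟩ := hΩ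
  obtain ⟨t', -, l', -, r', -, k', -, c', -, v', -⟩ := hΩ'
  constructor
  · intro H
    have hDV (a : D) (x : V) := Prod.ext_iff.1 (H (a, 0) (0, x))
    have hVD (a : D) (x : V) := Prod.ext_iff.1 (H (0, x) (a, 0))
    have hVV (x y : V) := Prod.ext_iff.1 (H (0, x) (0, y))
    simp only [twist, uSucc, hs.zero_left, hs.zero_right, t.zero_left,
      l.zero_left, l.zero_right, r.zero_left, r.zero_right, k.zero_left,
      c.zero_left, c.zero_right, v.zero_left, v.zero_right, t'.zero_right,
      l'.zero_left, r'.zero_left, k'.zero_right,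
      c'.zero_left, c'.zero_right, v'.zero_left, v'.zero_right, hg.map_zero, hh.map_zero,
      zero_add, add_zero] at hDV hVD hVV
    exact ⟨fun a x => (hDV a x).2, fun a x => (hVD a x).2, fun a x => (hVD a x).1,
      fun a x => (hDV a x).1, fun x y => (hVV x y).1, fun x y => (hVV x y).2⟩
  · rintro ⟨e1, e2, e3, e4, e5, e6⟩ ⟨a, x⟩ ⟨b, y⟩
    have e3 := e3 b x
    have e4 := e4 a y
    have e5 := e5 x y
    ext
    · simp only [twist, uSucc, hg.map_add, hs.1, hs.2.2.1, k'.1, r'.2.2.1]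
      linear_combination (norm := abel) e3 + e4 + e5
    · simp only [twist, uSucc, hh.map_add, e1, e2, e6, t'.1, l'.2.2.1]
      abel

theorem twist_hom_iff {s p : D → D → D} (hs : IsBilinear s) (hp : IsBilinear p)
    {Ω Ω' : ExtendingDatum D V} (hΩ : Ω.Bilinear) (hΩ' : Ω'.Bilinear) {g : V → D} {h : V → V}
    (hg : IsLinearMap ℂ g) (hh : IsLinearMap ℂ h) :
    ECond s p Ω Ω' g h ↔
      (∀ u v, twist g h (uSucc s Ω u v) = uSucc s Ω' (twist g h u) (twist g h v)) ∧
      (∀ u v, twist g h (uPrec p Ω u v) = uPrec p Ω' (twist g h u) (twist g h v)) := by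
  rw [eCond_iff, ← twist_uSucc_iff hs hΩ hΩ' hg hh,
    ← twist_uSucc_iff hp hΩ.swap hΩ'.swap hg hh]
  rfl

end Helpers

end DendriformES

/-! ### The equivalence and cohomology criteria -/

namespace DendriformES

/-- two extending structures are equivalent (∃ g linear, h linear
automorphism with (E1)–(E5)) iff the unified products are isomorphic over `D`;
they are cohomologous (∃ g with (g, id) satisfying (E1)–(E5)) iff there is such
an isomorphism which moreover co-stabilizes `V`. -/
theorem equivalent_iff_isomorphic {D V : Type*}
    [AddCommGroup D] [Module ℂ D] [AddCommGroup V] [Module ℂ V]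
    (s p : D → D → D) (hD : IsDendriform s p)
    (Ω Ω' : ExtendingDatum D V)
    (hΩ : IsExtendingStructure s p Ω) (hΩ' : IsExtendingStructure s p Ω') :
    ((∃ (g : V → D) (h : V → V), IsLinearMap ℂ g ∧ IsLinearMap ℂ h ∧
        Function.Bijective h ∧ ECond s p Ω Ω' g h) ↔
      (∃ φ : D × V → D × V, IsLinearMap ℂ φ ∧ Function.Bijective φ ∧
        (∀ u v, φ (uSucc s Ω u v) = uSucc s Ω' (φ u) (φ v)) ∧
        (∀ u v, φ (uPrec p Ω u v) = uPrec p Ω' (φ u) (φ v)) ∧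
        (∀ a : D, φ (a, 0) = (a, 0)))) ∧
    ((∃ g : V → D, IsLinearMap ℂ g ∧ ECond s p Ω Ω' g id) ↔
      (∃ φ : D × V → D × V, IsLinearMap ℂ φ ∧ Function.Bijective φ ∧
        (∀ u v, φ (uSucc s Ω u v) = uSucc s Ω' (φ u) (φ v)) ∧
        (∀ u v, φ (uPrec p Ω u v) = uPrec p Ω' (φ u) (φ v)) ∧
        (∀ a : D, φ (a, 0) = (a, 0)) ∧
        (∀ (a : D) (x : V), (φ (a, x)).2 = x))) := by
  obtain ⟨hs, hp, -⟩ := hD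
  have key {g : V → D} {h : V → V} (hg : IsLinearMap ℂ g) (hh : IsLinearMap ℂ h) :=
    twist_hom_iff hs hp hΩ.1 hΩ'.1 hg hh
  refine ⟨⟨?_, ?_⟩, ⟨?_, ?_⟩⟩
  · rintro ⟨g, h, hg, hh, hb, hE⟩
    obtain ⟨h1, h2⟩ := (key hg hh).1 hE
    exact ⟨twist g h, twist_isLinearMap hg hh, (twist_bijective_iff g h).2 hb, h1, h2,
      twist_fix hg hh⟩
  · rintro ⟨φ, hφ, hb, h1, h2, hfix⟩
    obtain ⟨g, h, hg, hh, rfl⟩ := eq_twist hφ hfix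
    exact ⟨g, h, hg, hh, (twist_bijective_iff g h).1 hb, (key hg hh).2 ⟨h1, h2⟩⟩
  · rintro ⟨g, hg, hE⟩
    have hh : IsLinearMap ℂ (id : V → V) := LinearMap.id.isLinear
    obtain ⟨h1, h2⟩ := (key hg hh).1 hE
    exact ⟨twist g id, twist_isLinearMap hg hh,
      (twist_bijective_iff g id).2 Function.bijective_id, h1, h2, twist_fix hg hh,
      fun _ _ => rfl⟩
  · rintro ⟨φ, hφ, hb, h1, h2, hfix, hV⟩
    obtain ⟨g, h, hg, hh, rfl⟩ := eq_twist hφ hfix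
    obtain rfl : h = id := funext fun x => hV 0 x
    exact ⟨g, hg, (key hg hh).2 ⟨h1, h2⟩⟩

end DendriformES
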